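/- arXiv:2010.09785 — 2 statements merged into one kernel-verified Lean document; each statement's English description precedes it below -/
import Mathlib

section
/- Let P and L be skew-symmetric 3×3 real matrices and set F := 1 − (1/2)·tr(L·P). Then det(I − L·P) = F², where I is the 3×3 identity matrix. -/
open Matrix

/-!
A skew-symmetric `3 × 3` matrix is the matrix of `x ↦ a ⨯₃ x` for some vector `a`. If `L` and `P`
come from `a` and `b`, the expansion `a ⨯₃ (b ⨯₃ x) = (a ⬝ᵥ x) • b - (a ⬝ᵥ b) • x` gives
`L * P = b aᵀ - (a ⬝ᵥ b) I`. Hence `tr (L * P) = -2 (a ⬝ᵥ b)`, so `F = 1 + a ⬝ᵥ b`, and `I - L * P`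
is the rank-one perturbation `F I - b aᵀ` of a scalar matrix, whose determinant is
`F ^ 2 * (F - a ⬝ᵥ b) = F ^ 2`.
-/

theorem det_smul_one_sub_vecMulVec {n R : Type*} [Fintype n] [DecidableEq n] [CommRing R]
    (c : R) (u v : n → R) :
    (c • (1 : Matrix n n R) - vecMulVec u v).det =
      c ^ Fintype.card n - (u ⬝ᵥ v) * c ^ (Fintype.card n - 1) := by
  rw [smul_one_eq_diagonal, ← scalar_apply, ← eval_charpoly, charpoly_vecMulVec]
  simp

theorem diag_eq_zero_of_transpose_eq_neg {n R : Type*} [NonAssocRing R]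
    (two_regular : IsLeftRegular (2 : R)) {A : Matrix n n R} (hA : Aᵀ = -A) : A.diag = 0 := by
  ext i
  have entry_eq_neg : A i i = -A i i := congr_fun₂ hA i i
  apply two_regular
  simpa [two_mul] using eq_neg_iff_add_eq_zero.mp entry_eq_neg

section CrossMatrix

variable {R : Type*} [CommRing R]

/-- The matrix `[a]ₓ` of the linear map `x ↦ a ⨯₃ x` in the standard basis, through which
skew-symmetric `3 × 3` matrices are identified with vectors. -/
def crossMatrix (a : Fin 3 → R) : Matrix (Fin 3) (Fin 3) R :=
  LinearMap.toMatrix' (crossProduct a)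

theorem crossMatrix_mulVec (a x : Fin 3 → R) : crossMatrix a *ᵥ x = a ⨯₃ x :=
  LinearMap.toMatrix'_mulVec _ _

theorem crossMatrix_eq (a : Fin 3 → R) :
    crossMatrix a = !![0, -a 2, a 1; a 2, 0, -a 0; -a 1, a 0, 0] := by
  ext i j
  fin_cases i <;> fin_cases j <;> simp [crossMatrix, LinearMap.toMatrix'_apply, cross_apply]

theorem exists_eq_crossMatrix {A : Matrix (Fin 3) (Fin 3) R} (hA : Aᵀ = -A) (hdiag : A.diag = 0) :
    ∃ a, A = crossMatrix a := by
  have skew (i j : Fin 3) : A j i = -A i j := congr_fun₂ hA i j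
  have diag_zero (i : Fin 3) : A i i = 0 := congr_fun hdiag i
  use ![A 2 1, A 0 2, A 1 0]
  rw [crossMatrix_eq]
  ext i j
  fin_cases i <;> fin_cases j <;> simp [diag_zero, ← skew]

theorem crossMatrix_mul_crossMatrix (a b : Fin 3 → R) :
    crossMatrix a * crossMatrix b = vecMulVec b a - (a ⬝ᵥ b) • 1 := by
  refine ext_of_mulVec_single fun j => ?_
  rw [← mulVec_mulVec, crossMatrix_mulVec, crossMatrix_mulVec, cross_cross_eq_smul_sub_smul',
    sub_mulVec, vecMulVec_mulVec, smul_mulVec, one_mulVec, op_smul_eq_smul, dotProduct_comm b a]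

theorem trace_crossMatrix_mul_crossMatrix (a b : Fin 3 → R) :
    (crossMatrix a * crossMatrix b).trace = -2 * (a ⬝ᵥ b) := by
  rw [crossMatrix_mul_crossMatrix, trace_sub, trace_vecMulVec, trace_smul, trace_one,
    dotProduct_comm b a, Fintype.card_fin, smul_eq_mul]
  push_cast
  ring

theorem det_one_sub_crossMatrix_mul_crossMatrix (a b : Fin 3 → R) :
    (1 - crossMatrix a * crossMatrix b).det = (1 + a ⬝ᵥ b) ^ 2 := by
  have rank_one_perturbation :
      1 - crossMatrix a * crossMatrix b = (1 + a ⬝ᵥ b) • 1 - vecMulVec b a := by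
    rw [crossMatrix_mul_crossMatrix, add_smul, one_smul]
    abel
  rw [rank_one_perturbation, det_smul_one_sub_vecMulVec, dotProduct_comm b a, Fintype.card_fin]
  ring

end CrossMatrix

theorem stmt_1_general {R : Type*} [CommRing R] (two_regular : IsLeftRegular (2 : R))
    {P L : Matrix (Fin 3) (Fin 3) R} (hP : Pᵀ = -P) (hL : Lᵀ = -L)
    {F : R} (hF : 2 * F = 2 - (L * P).trace) :
    (1 - L * P).det = F ^ 2 := by
  obtain ⟨a, rfl⟩ := exists_eq_crossMatrix hL (diag_eq_zero_of_transpose_eq_neg two_regular hL)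
  obtain ⟨b, rfl⟩ := exists_eq_crossMatrix hP (diag_eq_zero_of_transpose_eq_neg two_regular hP)
  have F_eq : F = 1 + a ⬝ᵥ b := by
    apply two_regular
    linear_combination hF - trace_crossMatrix_mul_crossMatrix a b
  rw [det_one_sub_crossMatrix_mul_crossMatrix, F_eq]

theorem stmt_1 (P L : Matrix (Fin 3) (Fin 3) ℝ)
    (hP : Pᵀ = -P) (hL : Lᵀ = -L)
    (F : ℝ) (hF : F = 1 - (1 / 2) * (L * P).trace) :
    (1 - L * P).det = F ^ 2 :=
  stmt_1_general (IsRegular.of_ne_zero two_ne_zero).left hP hL (by linarith)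
end

section
/- Let U = {x ∈ ℝ³ : x₁² + x₂² ≠ 0 and x₁² + x₂² − x₃² ≠ 0}, and let W be the vector field on U with components W¹(x) = x₁x₃·e(x)/(x₁²+x₂²), W²(x) = x₂x₃·e(x)/(x₁²+x₂²), W³(x) = e(x), where e(x) = exp(−1/(x₁²+x₂²−x₃²)²). Then W is a Poisson vector field (a 1-cocycle) of the 𝔰𝔩(2) Lie–Poisson structure: for all smooth functions f, g : U → ℝ, W({f,g}) = {W(f), g} + {f, W(g)}, where {·,·} is the bracket induced by the skew-symmetric matrix field P(x) with P(x)_{12} = −x₃, P(x)_{13} = −x₂, P(x)_{23} = x₁, and W(f) = Σ_i Wⁱ·∂f/∂x_i denotes the derivative of f along W. -/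
open Matrix

/-- The Poisson-type bracket induced by a matrix field `P` on `ℝ^m`. -/
noncomputable def pbracket {m : ℕ} (P : (Fin m → ℝ) → Matrix (Fin m) (Fin m) ℝ)
    (f g : (Fin m → ℝ) → ℝ) (x : Fin m → ℝ) : ℝ :=
  ∑ i, ∑ j, P x i j * fderiv ℝ f x (Pi.single i 1) * fderiv ℝ g x (Pi.single j 1)

/-- The derivative of a function `f` along a vector field `W` on `ℝ^m`:
`W(f) = ∑ i, Wⁱ ∂f/∂xᵢ`. -/
noncomputable def vfDeriv {m : ℕ} (W : (Fin m → ℝ) → Fin m → ℝ)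
    (f : (Fin m → ℝ) → ℝ) (x : Fin m → ℝ) : ℝ :=
  ∑ i, W x i * fderiv ℝ f x (Pi.single i 1)

/-- The coefficient matrix of the `𝔰𝔩(2)` Lie–Poisson bivector field on `ℝ³`. -/
def Psl2 (x : Fin 3 → ℝ) : Matrix (Fin 3) (Fin 3) ℝ :=
  !![0, -(x 2), -(x 1);
     x 2, 0, x 0;
     x 1, -(x 0), 0]

/-- The factor `e(x) = exp(−1/(x₁²+x₂²−x₃²)²)`. -/
noncomputable def eFac (x : Fin 3 → ℝ) : ℝ :=
  Real.exp (-1 / ((x 0) ^ 2 + (x 1) ^ 2 - (x 2) ^ 2) ^ 2)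

/-- The non-Hamiltonian Poisson vector field `W` of `𝔰𝔩(2)`. -/
noncomputable def Wsl2 (x : Fin 3 → ℝ) : Fin 3 → ℝ :=
  ![x 0 * x 2 * eFac x / ((x 0) ^ 2 + (x 1) ^ 2),
    x 1 * x 2 * eFac x / ((x 0) ^ 2 + (x 1) ^ 2),
    eFac x]

/-!
Let `C = x₁² + x₂² - x₃²` and let `θ` be the polar angle in the `(x₁, x₂)`-plane. In the
coordinates `(C, θ, x₃)` the `𝔰𝔩(2)` bivector is `∂_θ ∧ ∂_{x₃}`, so `V = ∂_{x₃}`, which in the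
linear coordinates has components `(x₁x₃/(x₁²+x₂²), x₂x₃/(x₁²+x₂²), 1)`, preserves it and `C` is a
Casimir function.
Multiplying a Poisson vector field by a Casimir function gives a Poisson vector field, because the
correction terms `V(f) {h, g}` in the Leibniz rule vanish; here `W = exp(-1/C²) V`. That
`L_V Π = 0` is checked in the linear coordinates.
-/

theorem differentiableAt_fderiv_of_contDiffAt_two {E F : Type*} [NormedAddCommGroup E]
    [NormedSpace ℝ E] [NormedAddCommGroup F] [NormedSpace ℝ F] {f : E → F} {x : E}
    (hf : ContDiffAt ℝ 2 f x) : DifferentiableAt ℝ (fderiv ℝ f) x :=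
  (hf.fderiv_right (m := 1) (by norm_num)).differentiableAt one_ne_zero

section CoordinateCalculus

variable {m : ℕ} {P : (Fin m → ℝ) → Matrix (Fin m) (Fin m) ℝ} {V W : (Fin m → ℝ) → Fin m → ℝ}
  {f g h : (Fin m → ℝ) → ℝ} {x : Fin m → ℝ}

/-- The gradient `(∂f/∂x₁, …, ∂f/∂xₘ)`, as a plain coordinate vector so that it can be multiplied
by matrices. -/
noncomputable def coordGrad (f : (Fin m → ℝ) → ℝ) (x : Fin m → ℝ) : Fin m → ℝ :=
  fun i ↦ fderiv ℝ f x (Pi.single i 1)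

/-- The Jacobian matrix `(∂Wⁱ/∂xⱼ)` of a vector field. -/
noncomputable def jacobian (W : (Fin m → ℝ) → Fin m → ℝ) (x : Fin m → ℝ) :
    Matrix (Fin m) (Fin m) ℝ :=
  LinearMap.toMatrix' (fderiv ℝ W x : (Fin m → ℝ) →ₗ[ℝ] Fin m → ℝ)

/-- The Lie derivative along `W` of the contravariant 2-tensor field with coefficient matrix `P`,
`(L_W P)ⁱʲ = W(Pⁱʲ) - ∑ₖ (∂ₖWⁱ Pᵏʲ + Pⁱᵏ ∂ₖWʲ)`. -/
noncomputable def lieDerivTensor (W : (Fin m → ℝ) → Fin m → ℝ)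
    (P : (Fin m → ℝ) → Matrix (Fin m) (Fin m) ℝ) (x : Fin m → ℝ) : Matrix (Fin m) (Fin m) ℝ :=
  of (fun i j ↦ vfDeriv W (fun y ↦ P y i j) x) - (jacobian W x * P x + P x * (jacobian W x)ᵀ)

/-- `W` is a Poisson vector field of `P` at the point `x`: it acts there as a derivation of the
bracket. The test functions only have to be `C²` at `x`. -/
def IsPoissonVectorFieldAt (P : (Fin m → ℝ) → Matrix (Fin m) (Fin m) ℝ)
    (W : (Fin m → ℝ) → Fin m → ℝ) (x : Fin m → ℝ) : Prop :=
  ∀ ⦃f g : (Fin m → ℝ) → ℝ⦄, ContDiffAt ℝ 2 f x → ContDiffAt ℝ 2 g x →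
    vfDeriv W (pbracket P f g) x = pbracket P (vfDeriv W f) g x + pbracket P f (vfDeriv W g) x

theorem pbracket_eq_dotProduct (P : (Fin m → ℝ) → Matrix (Fin m) (Fin m) ℝ)
    (f g : (Fin m → ℝ) → ℝ) (x : Fin m → ℝ) :
    pbracket P f g x = coordGrad f x ⬝ᵥ P x *ᵥ coordGrad g x := by
  simp only [pbracket, coordGrad, dotProduct, mulVec, Finset.mul_sum]
  exact Finset.sum_congr rfl fun i _ ↦ Finset.sum_congr rfl fun j _ ↦ by ring

theorem fderiv_eq_coordGrad_dotProduct (f : (Fin m → ℝ) → ℝ) (x v : Fin m → ℝ) :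
    fderiv ℝ f x v = coordGrad f x ⬝ᵥ v := by
  conv_lhs => rw [pi_eq_sum_univ' v]
  simp only [coordGrad, dotProduct, map_sum, map_smul, smul_eq_mul, mul_comm]

theorem vfDeriv_eq_fderiv_apply (W : (Fin m → ℝ) → Fin m → ℝ) (f : (Fin m → ℝ) → ℝ)
    (x : Fin m → ℝ) : vfDeriv W f x = fderiv ℝ f x (W x) := by
  rw [fderiv_eq_coordGrad_dotProduct, dotProduct_comm]
  rfl

theorem vfDeriv_smul (h : (Fin m → ℝ) → ℝ) (V : (Fin m → ℝ) → Fin m → ℝ)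
    (f : (Fin m → ℝ) → ℝ) : vfDeriv (h • V) f = h * vfDeriv V f := by
  ext x
  simp only [vfDeriv_eq_fderiv_apply, Pi.smul_apply', Pi.mul_apply, map_smul, smul_eq_mul]

theorem coordGrad_mul (hf : DifferentiableAt ℝ f x) (hg : DifferentiableAt ℝ g x) :
    coordGrad (f * g) x = f x • coordGrad g x + g x • coordGrad f x := by
  ext i
  simp [coordGrad, fderiv_mul hf hg]

theorem coordGrad_comp {φ : ℝ → ℝ} (hφ : DifferentiableAt ℝ φ (f x))
    (hf : DifferentiableAt ℝ f x) : coordGrad (φ ∘ f) x = deriv φ (f x) • coordGrad f x := by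
  ext i
  simp [coordGrad, (hφ.hasDerivAt.comp_hasFDerivAt x hf.hasFDerivAt).fderiv]

theorem differentiableAt_coordGrad_apply (hf : ContDiffAt ℝ 2 f x) (i : Fin m) :
    DifferentiableAt ℝ (fun y ↦ coordGrad f y i) x :=
  (differentiableAt_fderiv_of_contDiffAt_two hf).clm_apply (differentiableAt_const _)

theorem differentiableAt_vfDeriv (hW : DifferentiableAt ℝ W x) (hf : ContDiffAt ℝ 2 f x) :
    DifferentiableAt ℝ (vfDeriv W f) x := by
  rw [funext (vfDeriv_eq_fderiv_apply W f)]
  exact (differentiableAt_fderiv_of_contDiffAt_two hf).clm_apply hW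

theorem coordGrad_vfDeriv (hW : DifferentiableAt ℝ W x) (hf : ContDiffAt ℝ 2 f x) :
    coordGrad (vfDeriv W f) x =
      (fun i ↦ vfDeriv W (fun y ↦ coordGrad f y i) x) + coordGrad f x ᵥ* jacobian W x := by
  have hdf := differentiableAt_fderiv_of_contDiffAt_two hf
  have hsymm : IsSymmSndFDerivAt ℝ f x := hf.isSymmSndFDerivAt (by simp)
  ext i
  have hleft : coordGrad (vfDeriv W f) x i =
      fderiv ℝ (fderiv ℝ f) x (Pi.single i 1) (W x) +
        fderiv ℝ f x (fderiv ℝ W x (Pi.single i 1)) := by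
    rw [coordGrad, funext (vfDeriv_eq_fderiv_apply W f), fderiv_clm_apply hdf hW]
    exact add_comm _ _
  have hright : vfDeriv W (fun y ↦ coordGrad f y i) x =
      fderiv ℝ (fderiv ℝ f) x (W x) (Pi.single i 1) := by
    simp only [coordGrad]
    rw [vfDeriv_eq_fderiv_apply, fderiv_clm_apply hdf (differentiableAt_const _)]
    simp
  have hjac : (coordGrad f x ᵥ* jacobian W x) i = fderiv ℝ f x (fderiv ℝ W x (Pi.single i 1)) := by
    rw [fderiv_eq_coordGrad_dotProduct]
    simp [vecMul, jacobian, LinearMap.toMatrix'_apply, dotProduct]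
  rw [Pi.add_apply, hleft, hright, hjac, hsymm.eq]

theorem vfDeriv_pbracket (W : (Fin m → ℝ) → Fin m → ℝ)
    (hP : ∀ i j, DifferentiableAt ℝ (fun y ↦ P y i j) x)
    (hf : ContDiffAt ℝ 2 f x) (hg : ContDiffAt ℝ 2 g x) :
    vfDeriv W (pbracket P f g) x =
      coordGrad f x ⬝ᵥ of (fun i j ↦ vfDeriv W (fun y ↦ P y i j) x) *ᵥ coordGrad g x +
      (fun i ↦ vfDeriv W (fun y ↦ coordGrad f y i) x) ⬝ᵥ P x *ᵥ coordGrad g x +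
      coordGrad f x ⬝ᵥ P x *ᵥ (fun j ↦ vfDeriv W (fun y ↦ coordGrad g y j) x) := by
  have hterm (i j : Fin m) :
      HasFDerivAt (fun y ↦ P y i j * coordGrad f y i * coordGrad g y j) _ x :=
    ((hP i j).hasFDerivAt.fun_mul (differentiableAt_coordGrad_apply hf i).hasFDerivAt).fun_mul
      (differentiableAt_coordGrad_apply hg j).hasFDerivAt
  have hsum : HasFDerivAt (pbracket P f g) _ x :=
    HasFDerivAt.fun_sum fun i _ ↦ HasFDerivAt.fun_sum fun j _ ↦ hterm i j
  simp only [vfDeriv_eq_fderiv_apply, hsum.fderiv, dotProduct, mulVec, Finset.mul_sum, of_apply,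
    _root_.sum_apply, _root_.add_apply, _root_.smul_apply, smul_eq_mul, ← Finset.sum_add_distrib]
  exact Finset.sum_congr rfl fun i _ ↦ Finset.sum_congr rfl fun j _ ↦ by ring

/- The second derivatives of `f` and `g` cancel by symmetry, which leaves a first-order
bidifferential operator. -/
theorem vfDeriv_pbracket_eq_add_lieDerivTensor
    (hP : ∀ i j, DifferentiableAt ℝ (fun y ↦ P y i j) x) (hW : DifferentiableAt ℝ W x)
    (hf : ContDiffAt ℝ 2 f x) (hg : ContDiffAt ℝ 2 g x) :
    vfDeriv W (pbracket P f g) x =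
      pbracket P (vfDeriv W f) g x + pbracket P f (vfDeriv W g) x +
        pbracket (lieDerivTensor W P) f g x := by
  rw [vfDeriv_pbracket W hP hf hg]
  simp only [pbracket_eq_dotProduct, coordGrad_vfDeriv hW hf, coordGrad_vfDeriv hW hg,
    lieDerivTensor, add_dotProduct, dotProduct_add, mulVec_add, sub_mulVec, add_mulVec,
    dotProduct_sub, ← mulVec_mulVec, mulVec_transpose, dotProduct_mulVec _ (jacobian W x)]
  ring

theorem isPoissonVectorFieldAt_of_lieDerivTensor_eq_zero
    (hP : ∀ i j, DifferentiableAt ℝ (fun y ↦ P y i j) x) (hW : DifferentiableAt ℝ W x)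
    (hL : lieDerivTensor W P x = 0) : IsPoissonVectorFieldAt P W x := by
  intro f g hf hg
  simp [vfDeriv_pbracket_eq_add_lieDerivTensor hP hW hf hg, pbracket_eq_dotProduct _ f g, hL]

theorem pbracket_swap (hP : (P x)ᵀ = -P x) (f g : (Fin m → ℝ) → ℝ) :
    pbracket P f g x = -pbracket P g f x := by
  rw [pbracket_eq_dotProduct, pbracket_eq_dotProduct, dotProduct_mulVec, ← mulVec_transpose, hP,
    neg_mulVec, neg_dotProduct, dotProduct_comm]

theorem pbracket_mul_left (hf : DifferentiableAt ℝ f x) (hg : DifferentiableAt ℝ g x) :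
    pbracket P (f * g) h x = f x * pbracket P g h x + g x * pbracket P f h x := by
  simp only [pbracket_eq_dotProduct, coordGrad_mul hf hg, add_dotProduct, smul_dotProduct,
    smul_eq_mul]

theorem pbracket_comp_left {φ : ℝ → ℝ} (hφ : DifferentiableAt ℝ φ (f x))
    (hf : DifferentiableAt ℝ f x) :
    pbracket P (φ ∘ f) g x = deriv φ (f x) * pbracket P f g x := by
  rw [pbracket_eq_dotProduct, pbracket_eq_dotProduct, coordGrad_comp hφ hf, smul_dotProduct,
    smul_eq_mul]

theorem IsPoissonVectorFieldAt.smul_of_pbracket_eq_zero (hV : IsPoissonVectorFieldAt P V x)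
    (hP : (P x)ᵀ = -P x) (hVd : DifferentiableAt ℝ V x) (hh : DifferentiableAt ℝ h x)
    (hcas : ∀ g, pbracket P h g x = 0) : IsPoissonVectorFieldAt P (h • V) x := by
  have pull_out {u : (Fin m → ℝ) → ℝ} (hu : ContDiffAt ℝ 2 u x) (v : (Fin m → ℝ) → ℝ) :
      pbracket P (vfDeriv (h • V) u) v x = h x * pbracket P (vfDeriv V u) v x := by
    rw [vfDeriv_smul, pbracket_mul_left hh (differentiableAt_vfDeriv hVd hu), hcas, mul_zero,
      add_zero]
  intro f g hf hg
  calc vfDeriv (h • V) (pbracket P f g) x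
    _ = h x * (pbracket P (vfDeriv V f) g x + pbracket P f (vfDeriv V g) x) := by
      rw [vfDeriv_smul, Pi.mul_apply, hV hf hg]
    _ = pbracket P (vfDeriv (h • V) f) g x + pbracket P f (vfDeriv (h • V) g) x := by
      rw [pbracket_swap hP f, pbracket_swap hP f, pull_out hf, pull_out hg]
      ring

end CoordinateCalculus

section LiePoissonSl2

variable {x : Fin 3 → ℝ}

/-- The Casimir function `x₁² + x₂² - x₃²` of the `𝔰𝔩(2)` Lie–Poisson structure. -/
def casimirSl2 (x : Fin 3 → ℝ) : ℝ := x 0 ^ 2 + x 1 ^ 2 - x 2 ^ 2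

/-- The vector field `∂/∂x₃` of the coordinates `(C, θ, x₃)`, where `C` is the Casimir function and
`θ` the polar angle in the `(x₁, x₂)`-plane, so that `Wsl2` is `eFac` times it. Division by zero
makes it meaningless on the axis `x₁ = x₂ = 0`. -/
noncomputable def Vsl2 (x : Fin 3 → ℝ) : Fin 3 → ℝ :=
  ![x 0 * x 2 / (x 0 ^ 2 + x 1 ^ 2), x 1 * x 2 / (x 0 ^ 2 + x 1 ^ 2), 1]

theorem Psl2_transpose (x : Fin 3 → ℝ) : (Psl2 x)ᵀ = -Psl2 x := by
  ext i j
  fin_cases i <;> fin_cases j <;> simp [Psl2]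

theorem isLinearMap_Psl2_apply (i j : Fin 3) : IsLinearMap ℝ (fun x ↦ Psl2 x i j) where
  map_add v w := by fin_cases i <;> fin_cases j <;> simp [Psl2, add_comm]
  map_smul c v := by fin_cases i <;> fin_cases j <;> simp [Psl2]

theorem hasFDerivAt_Psl2_apply (x : Fin 3 → ℝ) (i j : Fin 3) :
    HasFDerivAt (fun y ↦ Psl2 y i j)
      (LinearMap.toContinuousLinearMap (isLinearMap_Psl2_apply i j).mk') x :=
  (LinearMap.toContinuousLinearMap (isLinearMap_Psl2_apply i j).mk').hasFDerivAt

theorem differentiable_casimirSl2 : Differentiable ℝ casimirSl2 := by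
  unfold casimirSl2
  fun_prop

theorem coordGrad_casimirSl2 (x : Fin 3 → ℝ) :
    coordGrad casimirSl2 x = ![2 * x 0, 2 * x 1, -2 * x 2] := by
  have hcoord (i : Fin 3) := hasFDerivAt_apply (𝕜 := ℝ) (F' := fun _ ↦ ℝ) i x
  have hC : HasFDerivAt casimirSl2 _ x :=
    (((hcoord 0).pow 2).add ((hcoord 1).pow 2)).sub ((hcoord 2).pow 2)
  ext i
  fin_cases i <;> simp [coordGrad, hC.fderiv]

theorem pbracket_casimirSl2_left (g : (Fin 3 → ℝ) → ℝ) (x : Fin 3 → ℝ) :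
    pbracket Psl2 casimirSl2 g x = 0 := by
  have hker : coordGrad casimirSl2 x ᵥ* Psl2 x = 0 := by
    rw [coordGrad_casimirSl2]
    ext j
    fin_cases j <;> simp [Psl2, vecMul, dotProduct, Fin.sum_univ_three] <;> ring
  rw [pbracket_eq_dotProduct, dotProduct_mulVec, hker, zero_dotProduct]

theorem hasFDerivAt_Vsl2 (hr : x 0 ^ 2 + x 1 ^ 2 ≠ 0) :
    HasFDerivAt Vsl2 (LinearMap.toContinuousLinearMap (toLin' !![
      x 2 * (x 1 ^ 2 - x 0 ^ 2) / (x 0 ^ 2 + x 1 ^ 2) ^ 2,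
        -(2 * x 0 * x 1 * x 2) / (x 0 ^ 2 + x 1 ^ 2) ^ 2, x 0 / (x 0 ^ 2 + x 1 ^ 2);
      -(2 * x 0 * x 1 * x 2) / (x 0 ^ 2 + x 1 ^ 2) ^ 2,
        x 2 * (x 0 ^ 2 - x 1 ^ 2) / (x 0 ^ 2 + x 1 ^ 2) ^ 2, x 1 / (x 0 ^ 2 + x 1 ^ 2);
      0, 0, 0])) x := by
  have hcoord (i : Fin 3) := hasFDerivAt_apply (𝕜 := ℝ) (F' := fun _ ↦ ℝ) i x
  have hinv := (hasDerivAt_inv hr).comp_hasFDerivAt x (((hcoord 0).pow 2).add ((hcoord 1).pow 2))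
  have hquot (i : Fin 3) := ((hcoord i).fun_mul (hcoord 2)).fun_mul hinv
  rw [hasFDerivAt_pi']
  intro i
  fin_cases i
  · refine (hquot 0).congr_fderiv (ContinuousLinearMap.ext fun v ↦ ?_)
    simp only [Function.comp_apply, Pi.add_apply, _root_.add_apply, _root_.smul_apply,
      ContinuousLinearMap.proj_apply, ContinuousLinearMap.comp_apply, smul_eq_mul, nsmul_eq_mul,
      LinearMap.coe_toContinuousLinearMap', toLin'_apply, cons_mulVec, dotProduct,
      Fin.sum_univ_three, cons_val, Fin.zero_eta]
    field_simp
    ring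
  · refine (hquot 1).congr_fderiv (ContinuousLinearMap.ext fun v ↦ ?_)
    simp only [Function.comp_apply, Pi.add_apply, _root_.add_apply, _root_.smul_apply,
      ContinuousLinearMap.proj_apply, ContinuousLinearMap.comp_apply, smul_eq_mul, nsmul_eq_mul,
      LinearMap.coe_toContinuousLinearMap', toLin'_apply, cons_mulVec, dotProduct,
      Fin.sum_univ_three, cons_val, Fin.mk_one]
    field_simp
    ring
  · refine (hasFDerivAt_const 1 x).congr_fderiv (ContinuousLinearMap.ext fun v ↦ ?_)
    simp [dotProduct, Fin.sum_univ_three]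

theorem lieDerivTensor_Vsl2_Psl2 (hr : x 0 ^ 2 + x 1 ^ 2 ≠ 0) :
    lieDerivTensor Vsl2 Psl2 x = 0 := by
  have hVP : of (fun i j ↦ vfDeriv Vsl2 (fun y ↦ Psl2 y i j) x) = Psl2 (Vsl2 x) := by
    ext i j
    simp [vfDeriv_eq_fderiv_apply, (hasFDerivAt_Psl2_apply x i j).fderiv]
  rw [lieDerivTensor, hVP, jacobian, (hasFDerivAt_Vsl2 hr).fderiv]
  ext i j
  simp only [LinearMap.coe_toContinuousLinearMap, LinearMap.toMatrix'_toLin', Matrix.sub_apply,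
    Matrix.add_apply, mul_apply, transpose_apply, Fin.sum_univ_three]
  fin_cases i <;> fin_cases j <;> simp [Psl2, Vsl2] <;> field_simp <;> ring

theorem isPoissonVectorFieldAt_Vsl2 (hr : x 0 ^ 2 + x 1 ^ 2 ≠ 0) :
    IsPoissonVectorFieldAt Psl2 Vsl2 x :=
  isPoissonVectorFieldAt_of_lieDerivTensor_eq_zero
    (fun i j ↦ (hasFDerivAt_Psl2_apply x i j).differentiableAt)
    (hasFDerivAt_Vsl2 hr).differentiableAt (lieDerivTensor_Vsl2_Psl2 hr)

theorem isPoissonVectorFieldAt_comp_casimirSl2_smul_Vsl2 {φ : ℝ → ℝ}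
    (hφ : DifferentiableAt ℝ φ (casimirSl2 x)) (hr : x 0 ^ 2 + x 1 ^ 2 ≠ 0) :
    IsPoissonVectorFieldAt Psl2 ((φ ∘ casimirSl2) • Vsl2) x := by
  have hC := differentiable_casimirSl2 x
  refine (isPoissonVectorFieldAt_Vsl2 hr).smul_of_pbracket_eq_zero (Psl2_transpose x)
    (hasFDerivAt_Vsl2 hr).differentiableAt (hφ.comp x hC) fun g ↦ ?_
  rw [pbracket_comp_left hφ hC, pbracket_casimirSl2_left, mul_zero]

theorem Wsl2_eq_comp_casimirSl2_smul_Vsl2 :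
    Wsl2 = ((fun t ↦ Real.exp (-1 / t ^ 2)) ∘ casimirSl2) • Vsl2 := by
  ext x i
  fin_cases i <;> simp [Wsl2, Vsl2, eFac, casimirSl2] <;> ring

theorem isOpen_setOf_radius_ne_zero_and_casimirSl2_ne_zero :
    IsOpen {x : Fin 3 → ℝ | x 0 ^ 2 + x 1 ^ 2 ≠ 0 ∧ x 0 ^ 2 + x 1 ^ 2 - x 2 ^ 2 ≠ 0} :=
  (isOpen_ne_fun (by fun_prop) (by fun_prop)).inter (isOpen_ne_fun (by fun_prop) (by fun_prop))

theorem stmt_11_general (hr : x 0 ^ 2 + x 1 ^ 2 ≠ 0) (hC : x 0 ^ 2 + x 1 ^ 2 - x 2 ^ 2 ≠ 0) :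
    IsPoissonVectorFieldAt Psl2 Wsl2 x := by
  rw [Wsl2_eq_comp_casimirSl2_smul_Vsl2]
  refine isPoissonVectorFieldAt_comp_casimirSl2_smul_Vsl2 ?_ hr
  have hC_sq : casimirSl2 x ^ 2 ≠ 0 := pow_ne_zero 2 hC
  fun_prop (disch := assumption)

end LiePoissonSl2

theorem stmt_11
    (U : Set (Fin 3 → ℝ))
    (hU : U = {x | (x 0) ^ 2 + (x 1) ^ 2 ≠ 0 ∧
                   (x 0) ^ 2 + (x 1) ^ 2 - (x 2) ^ 2 ≠ 0})
    (f g : (Fin 3 → ℝ) → ℝ)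
    (hf : ContDiffOn ℝ (⊤ : ℕ∞) f U) (hg : ContDiffOn ℝ (⊤ : ℕ∞) g U) :
    ∀ x ∈ U,
      vfDeriv Wsl2 (pbracket Psl2 f g) x =
        pbracket Psl2 (vfDeriv Wsl2 f) g x + pbracket Psl2 f (vfDeriv Wsl2 g) x := by
  subst hU
  intro x hx
  have hU := isOpen_setOf_radius_ne_zero_and_casimirSl2_ne_zero.mem_nhds hx
  exact stmt_11_general hx.1 hx.2 (contDiffAt_infty.mp (hf.contDiffAt hU) 2)
    (contDiffAt_infty.mp (hg.contDiffAt hU) 2)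
end
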